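/- Let (X,d_X) and (Y,d_Y) be metric spaces with quasi-bicombings Γ_X and Γ_Y, p ∈ X, q ∈ Y, R > 0, K₁, K₂ > 0, and Φ : B_R(q) → X a map with Φ(q) = p such that (a) d_X(p, Φ(y)) ≤ K₁·d_Y(q, y) for every y ∈ B_R(q), (b) d_X(Φ(y), Φ(y')) ≥ K₂·d_Y(y, y') for every y, y' ∈ B_R(q), and (c) for every γ ∈ Γ_Y having q as an endpoint and contained in B_R(q), the image Φ(γ) is a member of Γ_X. Let 0 < ε < π/2 and 0 < ε' < π/2 satisfy β(ε') ≤ (K₂/K₁)·β(ε). If p satisfies the ATB*(ε') condition with respect to Γ_X with constants L ∈ ℕ and K₁R, then q satisfies the ATB*(ε) condition with respect to Γ_Y with constants L and R. -/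

import Mathlib

/-- A minimizing geodesic in a metric space, parametrized by arc length on `[0, len]`. -/
structure MinGeodesic (X : Type*) [MetricSpace X] where
  len : ℝ
  len_nonneg : 0 ≤ len
  toFun : ℝ → X
  isom : ∀ s ∈ Set.Icc (0 : ℝ) len, ∀ t ∈ Set.Icc (0 : ℝ) len,
    dist (toFun s) (toFun t) = |s - t|

/-- The image (trace) of a minimizing geodesic. -/
def MinGeodesic.image {X : Type*} [MetricSpace X] (γ : MinGeodesic X) : Set X :=
  γ.toFun '' Set.Icc 0 γ.len

/-- A quasi-bicombing: a set of minimizing geodesics joining every pair of points. -/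
def IsQuasiBicombing {X : Type*} [MetricSpace X] (Γ : Set (MinGeodesic X)) : Prop :=
  ∀ x y : X, ∃ γ ∈ Γ, γ.toFun 0 = x ∧ γ.toFun γ.len = y

/-- The constant `β(ε) = (1 - cos ε) sin ε / (2 (1 + sin ε))`. -/
noncomputable def beta (ε : ℝ) : ℝ :=
  (1 - Real.cos ε) * Real.sin ε / (2 * (1 + Real.sin ε))

/-- The point `p` satisfies the `ATB*(ε)` condition with respect to the
quasi-bicombing `Γ`, with constants `L` and `R`. -/
def ATBStar {X : Type*} [MetricSpace X] (ε : ℝ) (Γ : Set (MinGeodesic X))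
    (p : X) (L : ℕ) (R : ℝ) : Prop :=
  ∀ (y : Fin L → X) (g : Fin L → MinGeodesic X),
    (∀ i, y i ∈ Metric.ball p R ∧ y i ≠ p) →
    (∀ i, g i ∈ Γ ∧ (g i).toFun 0 = p ∧ (g i).toFun (g i).len = y i) →
    ∃ i j, i ≠ j ∧ ∃ x ∈ (g j).image, dist (y i) x ≤ beta ε * dist p (y i)

/-!
Given points `yᵢ` and geodesics `γᵢ` from `q` to `yᵢ`, the condition at `Φ q`, applied to the
geodesics with traces `Φ(γᵢ)`, yields `i ≠ j` and a point `z` on `γⱼ` such that `Φ z` is close to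
`Φ yᵢ`. Pulling this back along `Φ` costs a factor `1 / K₂` in the distance from `yᵢ` to `z`, by
expansion, and a factor `K₁` in the radius, by the radial bound; the comparison of the two values of
`β` absorbs exactly the quotient `K₁ / K₂`.
-/

open Metric Set

namespace MinGeodesic

variable {X : Type*} [MetricSpace X] (γ : MinGeodesic X)

theorem dist_toFun_zero_toFun {t : ℝ} (ht : t ∈ Icc 0 γ.len) :
    dist (γ.toFun 0) (γ.toFun t) = t := by
  rw [γ.isom 0 (left_mem_Icc.2 γ.len_nonneg) t ht, zero_sub, abs_neg, abs_of_nonneg ht.1]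

theorem dist_toFun_zero_le_of_mem_image {x : X} (hx : x ∈ γ.image) :
    dist (γ.toFun 0) x ≤ dist (γ.toFun 0) (γ.toFun γ.len) := by
  obtain ⟨t, ht, rfl⟩ := hx
  rw [γ.dist_toFun_zero_toFun ht,
    γ.dist_toFun_zero_toFun (right_mem_Icc.2 γ.len_nonneg)]
  exact ht.2

theorem image_subset_ball {p : X} {R : ℝ} (hstart : γ.toFun 0 = p)
    (hend : γ.toFun γ.len ∈ ball p R) : γ.image ⊆ ball p R := by
  subst hstart
  intro x hx
  rw [mem_ball'] at hend ⊢
  exact (γ.dist_toFun_zero_le_of_mem_image hx).trans_lt hend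

end MinGeodesic

section Maps

variable {X Y : Type*} {K K₁ K₂ R : ℝ} {Φ : Y → X}

theorem mapsTo_ball_of_dist_le_mul [PseudoMetricSpace X] [PseudoMetricSpace Y] {p : X} {q : Y}
    (hK : 0 < K) (hradial : ∀ y ∈ ball q R, dist p (Φ y) ≤ K * dist q y) :
    MapsTo Φ (ball q R) (ball p (K * R)) := by
  intro y hy
  rw [mem_ball']
  exact (hradial y hy).trans_lt (mul_lt_mul_of_pos_left (mem_ball'.1 hy) hK)

theorem injOn_of_mul_dist_le_dist [PseudoMetricSpace X] [MetricSpace Y] {s : Set Y} (hK : 0 < K)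
    (hexpand : ∀ y ∈ s, ∀ y' ∈ s, K * dist y y' ≤ dist (Φ y) (Φ y')) : InjOn Φ s := by
  intro y hy y' hy' heq
  have hle : K * dist y y' ≤ 0 := by simpa only [heq, dist_self] using hexpand y hy y' hy'
  exact dist_le_zero.1 (nonpos_of_mul_nonpos_right hle hK)

theorem dist_le_mul_dist_of_map [MetricSpace X] [PseudoMetricSpace Y] {c c' : ℝ} {q y z : Y}
    (hK₁ : 0 < K₁) (hK₂ : 0 < K₂) (hradial : dist (Φ q) (Φ y) ≤ K₁ * dist q y)
    (hexpand : K₂ * dist y z ≤ dist (Φ y) (Φ z)) (hc : c' ≤ K₂ / K₁ * c) (hne : Φ q ≠ Φ y)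
    (hclose : dist (Φ y) (Φ z) ≤ c' * dist (Φ q) (Φ y)) : dist y z ≤ c * dist q y := by
  have hc' : 0 ≤ c' := nonneg_of_mul_nonneg_left (dist_nonneg.trans hclose) (dist_pos.2 hne)
  refine le_of_mul_le_mul_left ?_ hK₂
  calc
    K₂ * dist y z ≤ c' * dist (Φ q) (Φ y) := hexpand.trans hclose
    _ ≤ c' * (K₁ * dist q y) := by gcongr
    _ ≤ K₂ / K₁ * c * (K₁ * dist q y) := by gcongr
    _ = K₂ * (c * dist q y) := by field_simp

end Maps

theorem atbStar_transfer_general {X Y : Type*} [MetricSpace X] [MetricSpace Y]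
    (ΓX : Set (MinGeodesic X)) (ΓY : Set (MinGeodesic Y)) {q : Y} {R K₁ K₂ : ℝ}
    (hK₁ : 0 < K₁) (hK₂ : 0 < K₂) (Φ : Y → X)
    (hradial : ∀ y ∈ ball q R, dist (Φ q) (Φ y) ≤ K₁ * dist q y)
    (hexpand : ∀ y ∈ ball q R, ∀ y' ∈ ball q R, K₂ * dist y y' ≤ dist (Φ y) (Φ y'))
    (hgeodesic : ∀ γ ∈ ΓY, γ.toFun 0 = q → γ.image ⊆ ball q R →
      ∃ γ' ∈ ΓX, γ'.toFun 0 = Φ q ∧ γ'.toFun γ'.len = Φ (γ.toFun γ.len) ∧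
        γ'.image = Φ '' γ.image)
    {ε ε' : ℝ} (hβ : beta ε' ≤ K₂ / K₁ * beta ε) {L : ℕ}
    (hATB : ATBStar ε' ΓX (Φ q) L (K₁ * R)) : ATBStar ε ΓY q L R := by
  intro y g hy hg
  have himage (i : Fin L) : (g i).image ⊆ ball q R :=
    (g i).image_subset_ball (hg i).2.1 ((hg i).2.2 ▸ (hy i).1)
  have hne (i : Fin L) : Φ (y i) ≠ Φ q :=
    (injOn_of_mul_dist_le_dist hK₂ hexpand).ne (hy i).1
      (mem_ball_self (pos_of_mem_ball (hy i).1)) (hy i).2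
  choose g' hg'Γ hg'start hg'end hg'image using
    fun i => hgeodesic (g i) (hg i).1 (hg i).2.1 (himage i)
  obtain ⟨i, j, hij, x, hx, hclose⟩ := hATB (Φ ∘ y) g'
    (fun i => ⟨mapsTo_ball_of_dist_le_mul hK₁ hradial (hy i).1, hne i⟩)
    (fun i => ⟨hg'Γ i, hg'start i, (hg'end i).trans (congrArg Φ (hg i).2.2)⟩)
  obtain ⟨z, hz, rfl⟩ := (hg'image j).subset hx
  exact ⟨i, j, hij, z, hz, dist_le_mul_dist_of_map hK₁ hK₂ (hradial _ (hy i).1)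
    (hexpand _ (hy i).1 z (himage j hz)) hβ (hne i).symm hclose⟩

/-- The `ATB*`-version of the lifting lemma: via a map `Φ : B_R(q) → X` that is
Lipschitz-radial, expanding, and maps geodesics of `Γ_Y` issuing from `q` to
geodesics of `Γ_X`, the `ATB*` condition transfers from `p = Φ(q)` to `q`. -/
theorem atbStar_transfer
    {X Y : Type*} [MetricSpace X] [MetricSpace Y]
    (ΓX : Set (MinGeodesic X)) (ΓY : Set (MinGeodesic Y))
    (hΓX : IsQuasiBicombing ΓX) (hΓY : IsQuasiBicombing ΓY)
    (p : X) (q : Y) (R K₁ K₂ : ℝ) (hR : 0 < R) (hK₁ : 0 < K₁) (hK₂ : 0 < K₂)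
    (Φ : Y → X) (hΦq : Φ q = p)
    (ha : ∀ y ∈ Metric.ball q R, dist p (Φ y) ≤ K₁ * dist q y)
    (hb : ∀ y ∈ Metric.ball q R, ∀ y' ∈ Metric.ball q R,
      K₂ * dist y y' ≤ dist (Φ y) (Φ y'))
    (hc : ∀ γ ∈ ΓY, γ.toFun 0 = q → γ.image ⊆ Metric.ball q R →
      ∃ γ' ∈ ΓX, γ'.toFun 0 = p ∧ γ'.toFun γ'.len = Φ (γ.toFun γ.len) ∧
        γ'.image = Φ '' γ.image)
    (ε ε' : ℝ) (hε0 : 0 < ε) (hε : ε < Real.pi / 2)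
    (hε'0 : 0 < ε') (hε' : ε' < Real.pi / 2)
    (hβ : beta ε' ≤ (K₂ / K₁) * beta ε)
    (L : ℕ) (hATB : ATBStar ε' ΓX p L (K₁ * R)) :
    ATBStar ε ΓY q L R := by
  subst hΦq
  exact atbStar_transfer_general ΓX ΓY hK₁ hK₂ Φ ha hb hc hβ hATB
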